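/- Let L > 0, c > 0, let f : [0,L] → ℝ be continuously differentiable with f(x) > 0 for all x ∈ [0,L), and let p₁₀ : [0,L] → ℝ be continuously differentiable. Define g(x) = 1/f(x), p̃(x) = (1/c) ∫₀ˣ f(s) ds with inverse p̃⁻¹ on [0, p̃(L)], ψ(x,t) = p̃⁻¹( p̃(x) − t ), and p₁(x,t) = ( f(x)/f(ψ(x,t)) ) · p₁₀(ψ(x,t)) on the region D = {(x,t) : 0 < x < L, 0 ≤ t < p̃(x)}. Then p₁(x,0) = p₁₀(x) for all x ∈ (0,L), and at every interior point of D, ∂p₁/∂t(x,t) = −c · ∂/∂x [ g(x) p₁(x,t) ]. -/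

import Mathlib

/-!
Where `f > 0`, the function `p̃` is strictly increasing with `p̃' = f / c`, so `p̃⁻¹` is
differentiable on `(0, p̃ L)`. The product `g p₁` is then a travelling wave in the
variable `p̃ x - t`: `g p₁ = w (p̃ x - t)` with `w = (p₁₀ / f) ∘ p̃⁻¹`. The chain rule gives
`∂ₜ p₁ = -f w'` and `∂ₓ (g p₁) = (f / c) w'`, so the first is `-c` times the second.
-/

open Set Filter Topology MeasureTheory

section Inverse

variable {α β : Type*} [LinearOrder α]

lemma mapsTo_Ioo_of_rightInvOn_Icc [Preorder β] {F : α → β} {G : β → α} {a b : α}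
    (hF : StrictMonoOn F (Icc a b)) (hG : MapsTo G (Icc (F a) (F b)) (Icc a b))
    (hFG : RightInvOn G F (Icc (F a) (F b))) : MapsTo G (Ioo (F a) (F b)) (Ioo a b) := by
  intro y hy
  have hy' : y ∈ Icc (F a) (F b) := Ioo_subset_Icc_self hy
  have hGy : G y ∈ Icc a b := hG hy'
  have hab : a ≤ b := hGy.1.trans hGy.2
  exact ⟨(hF.lt_iff_lt (left_mem_Icc.2 hab) hGy).1 (hy.1.trans_eq (hFG hy').symm),
    (hF.lt_iff_lt hGy (right_mem_Icc.2 hab)).1 ((hFG hy').trans_lt hy.2)⟩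

lemma continuousAt_of_strictMonoOn_of_rightInvOn [LinearOrder β] [TopologicalSpace α]
    [OrderTopology α] [DenselyOrdered α] [TopologicalSpace β] [OrderTopology β]
    {F : α → β} {G : β → α} {s : Set α} {t : Set β} {y : β} (hF : StrictMonoOn F s)
    (hFst : MapsTo F s t) (hGts : MapsTo G t s) (hFG : RightInvOn G F t)
    (hs : s ∈ 𝓝 (G y)) (ht : t ∈ 𝓝 y) : ContinuousAt G y := by
  have hGF : LeftInvOn G F s := hF.injOn.rightInvOn_of_leftInvOn hFG hFst hGts
  have hG : MonotoneOn G t :=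
    Function.monotoneOn_of_rightInvOn_of_mapsTo hF.monotoneOn hFG hGts
  exact continuousAt_of_monotoneOn_of_image_mem_nhds hG ht
    (mem_of_superset hs (hGF.surjOn hFst))

lemma hasDerivAt_of_strictMonoOn_Icc_of_rightInvOn {F G : ℝ → ℝ} {a b y F' : ℝ}
    (hF : StrictMonoOn F (Icc a b)) (hG : MapsTo G (Icc (F a) (F b)) (Icc a b))
    (hFG : RightInvOn G F (Icc (F a) (F b))) (hy : y ∈ Ioo (F a) (F b))
    (hF' : HasDerivAt F F' (G y)) (hF'₀ : F' ≠ 0) : HasDerivAt G F'⁻¹ y := by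
  have hy' : Icc (F a) (F b) ∈ 𝓝 y := Icc_mem_nhds hy.1 hy.2
  have hGy : G y ∈ Ioo a b := mapsTo_Ioo_of_rightInvOn_Icc hF hG hFG hy
  have hcont : ContinuousAt G y := continuousAt_of_strictMonoOn_of_rightInvOn hF
    hF.monotoneOn.mapsTo_Icc hG hFG (Icc_mem_nhds hGy.1 hGy.2) hy'
  exact hF'.of_local_left_inverse hcont hF'₀ (mem_of_superset hy' fun _ hz => hFG hz)

end Inverse

section Primitive

variable {a b : ℝ}

lemma strictMonoOn_integral_of_pos {f : ℝ → ℝ} (hf : IntervalIntegrable f volume a b)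
    (hpos : ∀ x ∈ Ioo a b, 0 < f x) : StrictMonoOn (fun x => ∫ s in a..x, f s) (Icc a b) := by
  intro x hx y hy hxy
  have ha : a ∈ Icc a b := left_mem_Icc.2 (hx.1.trans hx.2)
  have hint {u v : ℝ} (hu : u ∈ Icc a b) (hv : v ∈ Icc a b) : IntervalIntegrable f volume u v :=
    hf.mono_set (uIcc_subset_uIcc (Icc_subset_uIcc hu) (Icc_subset_uIcc hv))
  calc ∫ s in a..x, f s
      < (∫ s in a..x, f s) + ∫ s in x..y, f s :=
        lt_add_of_pos_right _ <| intervalIntegral.intervalIntegral_pos_of_pos_on (hint hx hy)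
          (fun s hs => hpos s ⟨hx.1.trans_lt hs.1, hs.2.trans_le hy.2⟩) hxy
    _ = ∫ s in a..y, f s :=
        intervalIntegral.integral_add_adjacent_intervals (hint ha hx) (hint hx hy)

lemma hasDerivAt_integral_of_continuousOn_Ioo {E : Type*} [NormedAddCommGroup E]
    [NormedSpace ℝ E] [CompleteSpace E] {f : ℝ → E} {x : ℝ}
    (hf : IntervalIntegrable f volume a b) (hcont : ContinuousOn f (Ioo a b)) (hx : x ∈ Ioo a b) :
    HasDerivAt (fun u => ∫ s in a..u, f s) (f x) x :=
  intervalIntegral.integral_hasDerivAt_right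
    (hf.mono_set (uIcc_subset_uIcc_left (Icc_subset_uIcc (Ioo_subset_Icc_self hx))))
    (hcont.stronglyMeasurableAtFilter isOpen_Ioo x hx)
    (hcont.continuousAt (Ioo_mem_nhds hx.1 hx.2))

end Primitive

lemma exists_hasDerivAt_travellingWave {Φ w : ℝ → ℝ} {m c x t : ℝ} (hc : c ≠ 0)
    (hΦ : HasDerivAt Φ (1 / c * m) x) (hw : DifferentiableAt ℝ w (Φ x - t)) :
    ∃ pt q : ℝ, HasDerivAt (fun τ => m * w (Φ x - τ)) pt t ∧
      HasDerivAt (fun y => w (Φ y - t)) q x ∧ pt = -c * q := by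
  refine ⟨_, _, (hw.hasDerivAt.comp_const_sub (Φ x) t).const_mul m,
    hw.hasDerivAt.comp x (hΦ.sub_const t), ?_⟩
  field_simp

lemma exists_hasDerivAt_closedLoop {Φ G f p : ℝ → ℝ} {a b c x t : ℝ} (hc : c ≠ 0)
    (hΦ : StrictMonoOn Φ (Icc a b)) (hΦ' : ∀ y ∈ Ioo a b, HasDerivAt Φ (1 / c * f y) y)
    (hG : MapsTo G (Icc (Φ a) (Φ b)) (Icc a b)) (hΦG : RightInvOn G Φ (Icc (Φ a) (Φ b)))
    (hf : DifferentiableOn ℝ f (Ioo a b)) (hf₀ : ∀ y ∈ Ioo a b, f y ≠ 0)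
    (hp : DifferentiableOn ℝ p (Ioo a b)) (hx : x ∈ Ioo a b)
    (hxt : Φ x - t ∈ Ioo (Φ a) (Φ b)) :
    ∃ pt q : ℝ, HasDerivAt (fun τ => f x / f (G (Φ x - τ)) * p (G (Φ x - τ))) pt t ∧
      HasDerivAt (fun y => 1 / f y * (f y / f (G (Φ y - t)) * p (G (Φ y - t)))) q x ∧
      pt = -c * q := by
  have hz : G (Φ x - t) ∈ Ioo a b := mapsTo_Ioo_of_rightInvOn_Icc hΦ hG hΦG hxt
  have hnhds : Ioo a b ∈ 𝓝 (G (Φ x - t)) := Ioo_mem_nhds hz.1 hz.2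
  have hG' : DifferentiableAt ℝ G (Φ x - t) :=
    (hasDerivAt_of_strictMonoOn_Icc_of_rightInvOn hΦ hG hΦG hxt (hΦ' _ hz)
      (mul_ne_zero (one_div_ne_zero hc) (hf₀ _ hz))).differentiableAt
  have hw : DifferentiableAt ℝ (fun v => p (G v) / f (G v)) (Φ x - t) :=
    ((hp.differentiableAt hnhds).comp _ hG').fun_div ((hf.differentiableAt hnhds).comp _ hG')
      (hf₀ _ hz)
  obtain ⟨pt, q, hpt, hq, hptq⟩ := exists_hasDerivAt_travellingWave hc (hΦ' x hx) hw
  refine ⟨pt, q, hpt.congr_of_eventuallyEq (.of_forall fun τ => ?_),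
    hq.congr_of_eventuallyEq ?_, hptq⟩
  · ring
  · filter_upwards [Ioo_mem_nhds hx.1 hx.2] with y hy
    rw [one_div, div_mul_eq_mul_div, mul_div_assoc, inv_mul_cancel_left₀ (hf₀ y hy)]

theorem stmt10_general (L c : ℝ) (hc : 0 < c)
    (f : ℝ → ℝ) (hfi : IntervalIntegrable f volume 0 L)
    (hf : DifferentiableOn ℝ f (Ioo 0 L)) (hfpos : ∀ x ∈ Ioo 0 L, 0 < f x)
    (p₁₀ : ℝ → ℝ) (hp₁₀ : DifferentiableOn ℝ p₁₀ (Ioo 0 L))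
    (g ptilde : ℝ → ℝ) (hg : ∀ x, g x = 1 / f x)
    (hpt : ∀ x, ptilde x = (1 / c) * ∫ s in (0 : ℝ)..x, f s)
    (ptinv : ℝ → ℝ)
    (hinv : ∀ y ∈ Icc 0 (ptilde L), ptinv y ∈ Icc 0 L ∧ ptilde (ptinv y) = y)
    (ψ : ℝ → ℝ → ℝ) (hψ : ∀ x t : ℝ, ψ x t = ptinv (ptilde x - t))
    (p₁ : ℝ → ℝ → ℝ)
    (hp₁ : ∀ x t : ℝ, p₁ x t = (f x / f (ψ x t)) * p₁₀ (ψ x t)) :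
    (∀ x ∈ Ioo 0 L, p₁ x 0 = p₁₀ x) ∧
    (∀ x t : ℝ, 0 < x → x < L → 0 < t → t < ptilde x → ∃ pt q : ℝ,
      HasDerivAt (fun τ => p₁ x τ) pt t ∧
      HasDerivAt (fun y => g y * p₁ y t) q x ∧ pt = -c * q) := by
  have hpt_eq : ptilde = fun x => 1 / c * ∫ s in (0 : ℝ)..x, f s := funext hpt
  have hpt₀ : ptilde 0 = 0 := by simp [hpt]
  have hmono : StrictMonoOn ptilde (Icc 0 L) :=
    hpt_eq ▸ fun _ hx _ hy hxy =>
      mul_lt_mul_of_pos_left (strictMonoOn_integral_of_pos hfi hfpos hx hy hxy) (one_div_pos.2 hc)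
  have hderiv : ∀ x ∈ Ioo 0 L, HasDerivAt ptilde (1 / c * f x) x := fun x hx =>
    hpt_eq ▸ (hasDerivAt_integral_of_continuousOn_Ioo hfi hf.continuousOn hx).const_mul (1 / c)
  have hmaps : MapsTo ptinv (Icc (ptilde 0) (ptilde L)) (Icc 0 L) := fun y hy =>
    (hinv y (hpt₀ ▸ hy)).1
  have hright : RightInvOn ptinv ptilde (Icc (ptilde 0) (ptilde L)) := fun y hy =>
    (hinv y (hpt₀ ▸ hy)).2
  have hleft : LeftInvOn ptinv ptilde (Icc 0 L) :=
    hmono.injOn.rightInvOn_of_leftInvOn hright hmono.monotoneOn.mapsTo_Icc hmaps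
  refine ⟨fun x hx => ?_, fun x t hx₀ hxL ht htx => ?_⟩
  · rw [hp₁, hψ, sub_zero, hleft (Ioo_subset_Icc_self hx), div_self (hfpos x hx).ne', one_mul]
  · have hptL : ptilde x < ptilde L :=
      hmono ⟨hx₀.le, hxL.le⟩ (right_mem_Icc.2 (hx₀.trans hxL).le) hxL
    simp only [hp₁, hψ, hg]
    exact exists_hasDerivAt_closedLoop hc.ne' hmono hderiv hmaps hright hf
      (fun y hy => (hfpos y hy).ne') hp₁₀ ⟨hx₀, hxL⟩ ⟨by linarith, by linarith⟩

/-- The initial-data-determined branch `p₁(x,t) = (f(x)/f(ψ(x,t))) p₁₀(ψ(x,t))`, with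
`ψ(x,t) = p̃⁻¹(p̃(x) − t)`, solves the closed-loop equation `∂p₁/∂t = −c ∂(g(x)p₁)/∂x`
with `g = 1/f` on `{0 < x < L, 0 < t < p̃(x)}`, and `p₁(x,0) = p₁₀(x)`. -/
theorem stmt10 (L c : ℝ) (hL : 0 < L) (hc : 0 < c)
    (f : ℝ → ℝ) (hf : ContDiffOn ℝ 1 f (Set.Icc 0 L))
    (hfpos : ∀ x ∈ Set.Ico (0:ℝ) L, 0 < f x)
    (p₁₀ : ℝ → ℝ) (hp₁₀ : ContDiff ℝ 1 p₁₀)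
    (g ptilde : ℝ → ℝ) (hg : ∀ x, g x = 1 / f x)
    (hpt : ∀ x, ptilde x = (1 / c) * ∫ s in (0:ℝ)..x, f s)
    (ptinv : ℝ → ℝ)
    (hinv : ∀ y ∈ Set.Icc 0 (ptilde L), ptinv y ∈ Set.Icc 0 L ∧ ptilde (ptinv y) = y)
    (ψ : ℝ → ℝ → ℝ) (hψ : ∀ x t : ℝ, ψ x t = ptinv (ptilde x - t))
    (p₁ : ℝ → ℝ → ℝ)
    (hp₁ : ∀ x t : ℝ, p₁ x t = (f x / f (ψ x t)) * p₁₀ (ψ x t)) :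
    (∀ x ∈ Set.Ioo (0:ℝ) L, p₁ x 0 = p₁₀ x) ∧
    (∀ x t : ℝ, 0 < x → x < L → 0 < t → t < ptilde x → ∃ pt q : ℝ,
      HasDerivAt (fun τ => p₁ x τ) pt t ∧
      HasDerivAt (fun y => g y * p₁ y t) q x ∧ pt = -c * q) :=
  stmt10_general L c hc f (hf.continuousOn.intervalIntegrable_of_Icc hL.le)
    ((hf.differentiableOn one_ne_zero).mono Ioo_subset_Icc_self)
    (fun x hx => hfpos x (Ioo_subset_Ico_self hx)) p₁₀
    (hp₁₀.differentiable one_ne_zero).differentiableOn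
    g ptilde hg hpt ptinv hinv ψ hψ p₁ hp₁
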